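/- Fix a discrete memoryless MAC with finite alphabets. As a→0⁺, Δ(a) = √(2 V₁* a ln 2) + o(√a); equivalently, lim_{a→0⁺} Δ(a)/√a = √(2 V₁* ln 2), where V₁* = max_{p_{X₁}p_{X₂}∈𝒫*} Var(i(X₁,X₂)). -/

import Mathlib

/-!
Upper bound.  Let `q` be a joint input pmf with `I(X₁;X₂) ≤ a` and let `p` be the product of its
marginals.  Since relative entropy of the outputs is nonnegative (`golden`),
`I_q(X₁,X₂;Y) ≤ ∑ q i_p = I_p(X₁,X₂;Y) + ∑ (q - p) (i_p - C_sum)`, and the first term is at most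
`C_sum`.  The elementary bound `q ln (q/p) - q + p ≥ (q - p)² / (2 w)`, `w = p + |q - p| / 2`, and
Cauchy–Schwarz give `∑ (q - p) (i_p - C_sum) ≤ √(2 ln 2 · I(X₁;X₂) · F(q))` with
`F(q) = ∑ w (i_p - C_sum)²` (`IsumJ_upper`).  The function `F` is continuous on the simplex
(`continuousOn_Fn`) and equals `V₁` at capacity-achieving products.  If `V' > V₁*`, then
`I(X₁;X₂)` is positive on the compact set where `F ≥ V'` and `I(X₁,X₂;Y) ≥ C_sum`, hence bounded
below there by some `a₀ > 0`; so for `a < a₀` the gain is at most `√(2 V' a ln 2)`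
(`Delta_limsup`).

Lower bound.  Around a capacity-achieving product `p`, take `q_t = p (1 + t (i_p - C_sum))`.
Its mutual information is at most `D(q_t ‖ p) = t² V₁ / (2 ln 2) + O(t³)`, because the product of
the marginals is the closest product, and its sum rate is at least `C_sum + t V₁ - O(t²)`, since
the output divergence is bounded by a `χ²`-divergence (`exists_tilted`).  Choosing `t = c √a` with
`c` just below `√(2 ln 2 / V₁)` gives the matching bound (`Delta_liminf`).
-/

open scoped BigOperators Classical

noncomputable section

/-- A pmf on a finite type. -/
def IsPMF {α : Type*} [Fintype α] (p : α → ℝ) : Prop :=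
  (∀ a, 0 ≤ p a) ∧ ∑ a, p a = 1

variable {X1 X2 Y : Type*} [Fintype X1] [Fintype X2] [Fintype Y]

/-- A discrete memoryless MAC: a conditional pmf `W(y|x₁,x₂)` on finite alphabets. -/
def IsChannel (W : X1 → X2 → Y → ℝ) : Prop :=
  (∀ x1 x2 y, 0 ≤ W x1 x2 y) ∧ ∀ x1 x2, ∑ y, W x1 x2 y = 1

/-- The output marginal `p_Y` induced by a product input pmf `p₁·p₂`. -/
def outDist (W : X1 → X2 → Y → ℝ) (p1 : X1 → ℝ) (p2 : X2 → ℝ) (y : Y) : ℝ :=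
  ∑ x1, ∑ x2, p1 x1 * p2 x2 * W x1 x2 y

/-- The joint information density `i(x₁,x₂;y) = log₂(W(y|x₁,x₂)/p_Y(y))`. -/
def iDens (W : X1 → X2 → Y → ℝ) (p1 : X1 → ℝ) (p2 : X2 → ℝ)
    (x1 : X1) (x2 : X2) (y : Y) : ℝ :=
  Real.logb 2 (W x1 x2 y / outDist W p1 p2 y)

/-- The conditional output marginal `p_{Y|X₂}(y|x₂)`. -/
def condOut2 (W : X1 → X2 → Y → ℝ) (p1 : X1 → ℝ) (x2 : X2) (y : Y) : ℝ :=
  ∑ x1, p1 x1 * W x1 x2 y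

/-- The conditional output marginal `p_{Y|X₁}(y|x₁)`. -/
def condOut1 (W : X1 → X2 → Y → ℝ) (p2 : X2 → ℝ) (x1 : X1) (y : Y) : ℝ :=
  ∑ x2, p2 x2 * W x1 x2 y

/-- The conditional information density `i(x₁;y|x₂)`. -/
def iDensC1 (W : X1 → X2 → Y → ℝ) (p1 : X1 → ℝ) (x1 : X1) (x2 : X2) (y : Y) : ℝ :=
  Real.logb 2 (W x1 x2 y / condOut2 W p1 x2 y)

/-- The conditional information density `i(x₂;y|x₁)`. -/
def iDensC2 (W : X1 → X2 → Y → ℝ) (p2 : X2 → ℝ) (x1 : X1) (x2 : X2) (y : Y) : ℝ :=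
  Real.logb 2 (W x1 x2 y / condOut1 W p2 x1 y)

/-- `i(x₁,x₂) = E[i(x₁,x₂;Y) | X₁=x₁, X₂=x₂] = D(W(·|x₁,x₂) ‖ p_Y)`. -/
def iBar (W : X1 → X2 → Y → ℝ) (p1 : X1 → ℝ) (p2 : X2 → ℝ) (x1 : X1) (x2 : X2) : ℝ :=
  ∑ y, W x1 x2 y * iDens W p1 p2 x1 x2 y

/-- The mutual information `I(X₁,X₂;Y)` under the product input pmf `p₁·p₂` (log base 2). -/
def Isum (W : X1 → X2 → Y → ℝ) (p1 : X1 → ℝ) (p2 : X2 → ℝ) : ℝ :=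
  ∑ x1, ∑ x2, p1 x1 * p2 x2 * iBar W p1 p2 x1 x2

/-- The conditional mutual information `I(X₁;Y|X₂)` under `p₁·p₂`. -/
def Icond1 (W : X1 → X2 → Y → ℝ) (p1 : X1 → ℝ) (p2 : X2 → ℝ) : ℝ :=
  ∑ x1, ∑ x2, ∑ y, p1 x1 * p2 x2 * W x1 x2 y * iDensC1 W p1 x1 x2 y

/-- The conditional mutual information `I(X₂;Y|X₁)` under `p₁·p₂`. -/
def Icond2 (W : X1 → X2 → Y → ℝ) (p1 : X1 → ℝ) (p2 : X2 → ℝ) : ℝ :=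
  ∑ x1, ∑ x2, ∑ y, p1 x1 * p2 x2 * W x1 x2 y * iDensC2 W p2 x1 x2 y

/-- `V₁ = Var(i(X₁,X₂))`, the information variance of the codewords. -/
def Vone (W : X1 → X2 → Y → ℝ) (p1 : X1 → ℝ) (p2 : X2 → ℝ) : ℝ :=
  ∑ x1, ∑ x2, p1 x1 * p2 x2 * (iBar W p1 p2 x1 x2 - Isum W p1 p2) ^ 2

/-- `V₂ = E[Var(i(X₁,X₂;Y)|X₁,X₂)]`, the information variance of the channel noise. -/
def Vtwo (W : X1 → X2 → Y → ℝ) (p1 : X1 → ℝ) (p2 : X2 → ℝ) : ℝ :=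
  ∑ x1, ∑ x2, ∑ y,
    p1 x1 * p2 x2 * W x1 x2 y * (iDens W p1 p2 x1 x2 y - iBar W p1 p2 x1 x2) ^ 2

/-- The average error probability of an `(M₁,M₂,K)` facilitated MAC code (facilitator `e`,
encoders `f₁, f₂`, decoder `g`) on the `n`-fold memoryless product channel. -/
def avgErr (W : X1 → X2 → Y → ℝ) {n M1 M2 K : ℕ}
    (e : Fin M1 → Fin M2 → Fin K)
    (f1 : Fin M1 → Fin K → Fin n → X1) (f2 : Fin M2 → Fin K → Fin n → X2)
    (g : (Fin n → Y) → Fin M1 × Fin M2) : ℝ :=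
  (1 / ((M1 : ℝ) * M2)) * ∑ m1, ∑ m2, ∑ y : Fin n → Y,
    (∏ i, W (f1 m1 (e m1 m2) i) (f2 m2 (e m1 m2) i) (y i)) *
      (if g y = (m1, m2) then 0 else 1)

/-- Existence of an `(n,M₁,M₂,K,ε)` facilitated MAC code. -/
def ExistsCode (W : X1 → X2 → Y → ℝ) (n M1 M2 K : ℕ) (ε : ℝ) : Prop :=
  ∃ (e : Fin M1 → Fin M2 → Fin K) (f1 : Fin M1 → Fin K → Fin n → X1)
    (f2 : Fin M2 → Fin K → Fin n → X2) (g : (Fin n → Y) → Fin M1 × Fin M2),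
    avgErr W e f1 f2 g ≤ ε

/-- The fundamental sum-rate limit `R_sum(n,ε,K)`. -/
def Rsum (W : X1 → X2 → Y → ℝ) (n : ℕ) (ε : ℝ) (K : ℕ) : ℝ :=
  sSup {r | ∃ M1 M2 : ℕ, 0 < M1 ∧ 0 < M2 ∧ ExistsCode W n M1 M2 K ε ∧
    r = Real.logb 2 ((M1 : ℝ) * M2) / n}

/-- The sum-capacity `C_sum = max_{p₁·p₂} I(X₁,X₂;Y)`. -/
def Csum (W : X1 → X2 → Y → ℝ) : ℝ :=
  sSup {r | ∃ p1 p2, IsPMF p1 ∧ IsPMF p2 ∧ r = Isum W p1 p2}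

/-- The output marginal induced by a joint input pmf `q` on `𝒳₁×𝒳₂`. -/
def outDistJ (W : X1 → X2 → Y → ℝ) (q : X1 × X2 → ℝ) (y : Y) : ℝ :=
  ∑ x1, ∑ x2, q (x1, x2) * W x1 x2 y

/-- The mutual information `I(X₁,X₂;Y)` under a joint input pmf `q` (log base 2). -/
def IsumJ (W : X1 → X2 → Y → ℝ) (q : X1 × X2 → ℝ) : ℝ :=
  ∑ x1, ∑ x2, ∑ y, q (x1, x2) * W x1 x2 y *
    Real.logb 2 (W x1 x2 y / outDistJ W q y)

/-- First marginal of a joint pmf. -/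
def margA (q : X1 × X2 → ℝ) (x1 : X1) : ℝ := ∑ x2, q (x1, x2)

/-- Second marginal of a joint pmf. -/
def margB (q : X1 × X2 → ℝ) (x2 : X2) : ℝ := ∑ x1, q (x1, x2)

/-- The mutual information `I(X₁;X₂)` of a joint input pmf `q` (log base 2). -/
def MIJ (q : X1 × X2 → ℝ) : ℝ :=
  ∑ x1, ∑ x2, q (x1, x2) *
    Real.logb 2 (q (x1, x2) / (margA q x1 * margB q x2))

/-- `Δ(a) = max{I(X₁,X₂;Y) : joint pmfs with I(X₁;X₂) ≤ a} − C_sum`. -/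
def Delta (W : X1 → X2 → Y → ℝ) (a : ℝ) : ℝ :=
  sSup {r | ∃ q : X1 × X2 → ℝ, IsPMF q ∧ MIJ q ≤ a ∧ r = IsumJ W q} - Csum W

/-- `V₁* = max_{p₁·p₂ ∈ 𝒫*} Var(i(X₁,X₂))`, the largest codeword information variance among
sum-capacity-achieving product pmfs. -/
def VoneStar (W : X1 → X2 → Y → ℝ) : ℝ :=
  sSup {v | ∃ p1 p2, IsPMF p1 ∧ IsPMF p2 ∧ Isum W p1 p2 = Csum W ∧ v = Vone W p1 p2}

set_option linter.unusedSectionVars false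

/-! ### Scalar inequalities for `x log x` and relative entropy -/

theorem entropy_lower_of_le_one {t : ℝ} (h0 : 0 ≤ t) (h1 : t ≤ 1) :
    (t - 1) ^ 2 / 2 ≤ t * Real.log t - t + 1 := by
  have hd : ∀ x : ℝ, 0 < x → HasDerivAt (fun x : ℝ => x * Real.log x - (x ^ 2 - 1) / 2)
      (Real.log x + 1 - x) x := by
    intro x hx
    have h2 := (((hasDerivAt_pow 2 x).sub_const 1).div_const 2)
    exact ((Real.hasDerivAt_mul_log hx.ne').sub h2).congr_deriv (by push_cast; ring)
  have anti : AntitoneOn (fun x : ℝ => x * Real.log x - (x ^ 2 - 1) / 2) (Set.Icc 0 1) := by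
    apply antitoneOn_of_deriv_nonpos (convex_Icc 0 1)
    · exact (Real.continuous_mul_log.sub (by fun_prop)).continuousOn
    · intro x hx
      rw [interior_Icc] at hx
      exact (hd x hx.1).differentiableAt.differentiableWithinAt
    · intro x hx
      rw [interior_Icc] at hx
      rw [(hd x hx.1).deriv]
      linarith [Real.log_le_sub_one_of_pos hx.1]
  have h := anti ⟨h0, h1⟩ ⟨zero_le_one, le_rfl⟩ h1
  simp only [Real.log_one] at h
  nlinarith

/-- A second-order lower bound for the integrand of relative entropy.  The denominator
`2 (p + |q - p| / 2)` has the sharp leading constant `2 p` as `q → p`. -/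
theorem relEntropy_term_lower {p q : ℝ} (hp : 0 ≤ p) (hq : 0 ≤ q) (hpq : p = 0 → q = 0) :
    (q - p) ^ 2 / (2 * (p + |q - p| / 2)) ≤ q * Real.log (q / p) - q + p := by
  rcases hp.eq_or_lt with h | hp'
  · subst h; simp [hpq rfl]
  rcases le_total q p with hle | hle
  · have h := entropy_lower_of_le_one (t := q / p) (by positivity) ((div_le_one hp').2 hle)
    have h2 : p * ((q / p - 1) ^ 2 / 2) ≤ p * (q / p * Real.log (q / p) - q / p + 1) :=
      mul_le_mul_of_nonneg_left h hp
    have e1 : p * ((q / p - 1) ^ 2 / 2) = (q - p) ^ 2 / (2 * p) := by field_simp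
    have e2 : p * (q / p * Real.log (q / p) - q / p + 1) = q * Real.log (q / p) - q + p := by
      field_simp
    rw [e1, e2] at h2
    refine le_trans ?_ h2
    gcongr
    linarith [abs_nonneg (q - p)]
  · have hq' : 0 < q := hp'.trans_le hle
    have hx : 0 ≤ (q - p) / p := div_nonneg (by linarith) hp
    have h := Real.le_log_one_add_of_nonneg hx
    have e1 : 1 + (q - p) / p = q / p := by field_simp; ring
    have e2 : 2 * ((q - p) / p) / ((q - p) / p + 2) = 2 * (q - p) / (q + p) := by
      field_simp; ring
    rw [e1, e2] at h
    have h2 := mul_le_mul_of_nonneg_left h hq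
    rw [abs_of_nonneg (by linarith)]
    have e3 : (q - p) ^ 2 / (2 * (p + (q - p) / 2)) = q * (2 * (q - p) / (q + p)) - q + p := by
      have : (2 * (p + (q - p) / 2)) = q + p := by ring
      rw [this]; field_simp; ring
    rw [e3]; linarith

theorem entropy_upper {u : ℝ} (hu : |u| ≤ 1 / 2) :
    (1 + u) * Real.log (1 + u) ≤ u + u ^ 2 / 2 + 4 * |u| ^ 3 := by
  have h := Real.abs_log_sub_add_sum_range_le (x := -u) (by rw [abs_neg]; linarith) 2
  simp only [Finset.sum_range_succ, Finset.sum_range_zero, abs_neg, sub_neg_eq_add] at h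
  have h1 := (abs_le.1 h).2
  norm_num at h1
  have h2 : |u| ^ 3 / (1 - |u|) ≤ 2 * |u| ^ 3 := by
    rw [div_le_iff₀ (by linarith)]
    have : 0 ≤ |u| ^ 3 := by positivity
    nlinarith
  have h3 : Real.log (1 + u) ≤ u - u ^ 2 / 2 + 2 * |u| ^ 3 := by linarith
  have hu' := abs_le.1 hu
  have h4 := mul_le_mul_of_nonneg_left h3 (show 0 ≤ 1 + u by linarith)
  have h5 : -|u| ^ 3 ≤ u ^ 3 := by
    rw [← abs_pow]; exact neg_abs_le _
  have h6 : 0 ≤ |u| ^ 3 := by positivity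
  nlinarith

/-- Gibbs' inequality in unnormalised form. -/
theorem gibbs {α : Type*} [Fintype α] {a b : α → ℝ} (ha : ∀ i, 0 ≤ a i) (hb : ∀ i, 0 ≤ b i)
    (hab : ∀ i, b i = 0 → a i = 0) (hs : ∑ i, b i ≤ ∑ i, a i) :
    0 ≤ ∑ i, a i * (Real.log (a i) - Real.log (b i)) := by
  have h : ∑ i, (a i - b i) ≤ ∑ i, a i * (Real.log (a i) - Real.log (b i)) := by
    refine Finset.sum_le_sum fun i _ => ?_
    rcases (ha i).eq_or_lt with h0 | h0
    · rw [← h0]; simpa using hb i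
    · have hb0 : 0 < b i := lt_of_le_of_ne (hb i) fun h => h0.ne' (hab i h.symm)
      have h1 := Real.log_le_sub_one_of_pos (div_pos hb0 h0)
      rw [Real.log_div hb0.ne' h0.ne'] at h1
      have h2 := mul_le_mul_of_nonneg_left h1 h0.le
      have e : a i * (b i / a i - 1) = b i - a i := by field_simp
      rw [e] at h2
      linarith
  rw [Finset.sum_sub_distrib] at h
  linarith

/-- Relative entropy is bounded by the `χ²`-divergence. -/
theorem relEntropy_le_chiSq {α : Type*} [Fintype α] {a b : α → ℝ} (ha : ∀ i, 0 ≤ a i)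
    (hb : ∀ i, 0 ≤ b i) (hab : ∀ i, b i = 0 → a i = 0) (hs : ∑ i, a i = ∑ i, b i) :
    ∑ i, a i * (Real.log (a i) - Real.log (b i)) ≤ ∑ i, (a i - b i) ^ 2 / b i := by
  have h : ∑ i, a i * (Real.log (a i) - Real.log (b i)) ≤
      ∑ i, ((a i - b i) ^ 2 / b i + (a i - b i)) := by
    refine Finset.sum_le_sum fun i _ => ?_
    rcases (hb i).eq_or_lt with h0 | h0
    · simp [← h0, hab i h0.symm]
    · have e : (a i - b i) ^ 2 / b i + (a i - b i) = a i * (a i / b i - 1) := by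
        field_simp; ring
      rw [e]
      rcases (ha i).eq_or_lt with h1 | h1
      · simp [← h1]
      · refine mul_le_mul_of_nonneg_left ?_ h1.le
        rw [← Real.log_div h1.ne' h0.ne']
        exact Real.log_le_sub_one_of_pos (div_pos h1 h0)
  rw [Finset.sum_add_distrib, Finset.sum_sub_distrib, hs, sub_self, add_zero] at h
  exact h

/-- A product `h * log k` stays continuous across the zeros of `k` when `|h| ≤ K k ^ (1/4)`. -/
theorem continuousOn_mul_log {E : Type*} [TopologicalSpace E] {S : Set E} {h k : E → ℝ} {K : ℝ}
    (hh : ContinuousOn h S) (hk : ContinuousOn k S) (hk0 : ∀ x ∈ S, 0 ≤ k x)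
    (hb : ∀ x ∈ S, |h x| ≤ K * k x ^ (1 / 4 : ℝ)) :
    ContinuousOn (fun x => h x * Real.log (k x)) S := by
  intro x hx
  by_cases hkx : k x = 0
  · have hx0 : h x * Real.log (k x) = 0 := by rw [hkx]; simp
    unfold ContinuousWithinAt
    simp only [hx0]
    -- `k ^ (1/4) * log k = 4 z log z` with `z = k ^ (1/4)`, and `z log z` is continuous at `0`.
    have hz : ContinuousOn (fun x => k x ^ (1 / 4 : ℝ)) S :=
      hk.rpow_const fun _ _ => Or.inr (by norm_num)
    have hc : ContinuousOn (fun x => K * |4 * (k x ^ (1 / 4 : ℝ) * Real.log (k x ^ (1 / 4 : ℝ)))|) S :=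
      ((Real.continuous_mul_log.comp_continuousOn hz).const_mul 4).abs.const_mul K |>.congr
        fun _ _ => rfl
    have ht := (hc x hx).tendsto
    have h00 : K * |4 * ((0 : ℝ) ^ (1 / 4 : ℝ) * Real.log ((0 : ℝ) ^ (1 / 4 : ℝ)))| = 0 := by
      norm_num
    simp only [hkx, h00] at ht
    refine squeeze_zero_norm' ?_ ht
    filter_upwards [self_mem_nhdsWithin] with y hy
    rw [Real.norm_eq_abs, abs_mul]
    rcases (hk0 y hy).eq_or_lt with h0 | h0
    · rw [← h0]; simp
    · rw [Real.log_rpow h0]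
      have e : 4 * (k y ^ (1 / 4 : ℝ) * (1 / 4 * Real.log (k y))) =
          k y ^ (1 / 4 : ℝ) * Real.log (k y) := by ring
      rw [e, abs_mul, abs_of_nonneg (Real.rpow_nonneg h0.le _), ← mul_assoc]
      exact mul_le_mul_of_nonneg_right (hb y hy) (abs_nonneg _)
  · exact (hh x hx).mul ((hk x hx).log hkx)

/-! ### Joint and product input distributions -/

/-- The product of two pmfs, as a function on the product alphabet. -/
def prodDist (p1 : X1 → ℝ) (p2 : X2 → ℝ) (x : X1 × X2) : ℝ := p1 x.1 * p2 x.2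

/-- The product of the two marginals of a joint pmf `q`. -/
def indep (q : X1 × X2 → ℝ) : X1 × X2 → ℝ := prodDist (margA q) (margB q)

/-- `D(W(·|x₁,x₂) ‖ p_Y)` in bits, where `p_Y` is the output marginal of a joint input pmf `p`. -/
def jBar (W : X1 → X2 → Y → ℝ) (p : X1 × X2 → ℝ) (x : X1 × X2) : ℝ :=
  ∑ y, W x.1 x.2 y * Real.logb 2 (W x.1 x.2 y / outDistJ W p y)

/-- The weight `p + |q - p| / 2`, with `p` the product of the marginals of `q`.  It agrees
with `q` when `q` is itself a product. -/
def wt (q : X1 × X2 → ℝ) (x : X1 × X2) : ℝ := indep q x + |q x - indep q x| / 2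

/-- The second moment of `i - C_sum` under the weight `wt q`, where `i` is computed from the
product of the marginals of `q`.  It equals `Vone` at sum-capacity-achieving products. -/
def Fn (W : X1 → X2 → Y → ℝ) (q : X1 × X2 → ℝ) : ℝ :=
  ∑ x, wt q x * (jBar W (indep q) x - Csum W) ^ 2

theorem outDistJ_eq (W : X1 → X2 → Y → ℝ) (q : X1 × X2 → ℝ) (y : Y) :
    outDistJ W q y = ∑ x, q x * W x.1 x.2 y := by
  rw [outDistJ, Fintype.sum_prod_type]

theorem IsumJ_eq (W : X1 → X2 → Y → ℝ) (q : X1 × X2 → ℝ) :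
    IsumJ W q = ∑ x, q x * jBar W q x := by
  rw [IsumJ, Fintype.sum_prod_type]
  simp only [jBar, Finset.mul_sum, mul_assoc]

theorem Isum_eq (W : X1 → X2 → Y → ℝ) (p1 : X1 → ℝ) (p2 : X2 → ℝ) :
    Isum W p1 p2 = IsumJ W (prodDist p1 p2) := by
  rw [IsumJ_eq, Fintype.sum_prod_type]
  rfl

theorem Vone_eq (W : X1 → X2 → Y → ℝ) (p1 : X1 → ℝ) (p2 : X2 → ℝ) :
    Vone W p1 p2 = ∑ x, prodDist p1 p2 x *
      (jBar W (prodDist p1 p2) x - Isum W p1 p2) ^ 2 := by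
  rw [Fintype.sum_prod_type]
  rfl

theorem MIJ_eq (q : X1 × X2 → ℝ) :
    MIJ q * Real.log 2 = ∑ x, q x * Real.log (q x / indep q x) := by
  have h2 : Real.log 2 ≠ 0 := (Real.log_pos one_lt_two).ne'
  rw [Fintype.sum_prod_type, MIJ, Finset.sum_mul]
  refine Finset.sum_congr rfl fun x1 _ => ?_
  rw [Finset.sum_mul]
  refine Finset.sum_congr rfl fun x2 _ => ?_
  simp only [Real.logb, indep, prodDist]
  field_simp

theorem prodDist_isPMF {p1 : X1 → ℝ} {p2 : X2 → ℝ} (h1 : IsPMF p1) (h2 : IsPMF p2) :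
    IsPMF (prodDist p1 p2) := by
  refine ⟨fun x => mul_nonneg (h1.1 _) (h2.1 _), ?_⟩
  rw [Fintype.sum_prod_type]
  simp only [prodDist, ← Finset.mul_sum, h2.2, mul_one, h1.2]

theorem margA_prodDist {p1 : X1 → ℝ} {p2 : X2 → ℝ} (h2 : IsPMF p2) :
    margA (prodDist p1 p2) = p1 := by
  funext x
  simp only [margA, prodDist, ← Finset.mul_sum, h2.2, mul_one]

theorem margB_prodDist {p1 : X1 → ℝ} {p2 : X2 → ℝ} (h1 : IsPMF p1) :
    margB (prodDist p1 p2) = p2 := by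
  funext x
  simp only [margB, prodDist, ← Finset.sum_mul, h1.2, one_mul]

theorem margA_isPMF {q : X1 × X2 → ℝ} (hq : IsPMF q) : IsPMF (margA q) :=
  ⟨fun _ => Finset.sum_nonneg fun _ _ => hq.1 _, by
    rw [← hq.2, Fintype.sum_prod_type]; rfl⟩

theorem margB_isPMF {q : X1 × X2 → ℝ} (hq : IsPMF q) : IsPMF (margB q) :=
  ⟨fun _ => Finset.sum_nonneg fun _ _ => hq.1 _, by
    rw [← hq.2, Fintype.sum_prod_type_right]; rfl⟩

theorem indep_isPMF {q : X1 × X2 → ℝ} (hq : IsPMF q) : IsPMF (indep q) :=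
  prodDist_isPMF (margA_isPMF hq) (margB_isPMF hq)

theorem indep_prodDist {p1 : X1 → ℝ} {p2 : X2 → ℝ} (h1 : IsPMF p1) (h2 : IsPMF p2) :
    indep (prodDist p1 p2) = prodDist p1 p2 := by
  rw [indep, margA_prodDist h2, margB_prodDist h1]

theorem le_margA {q : X1 × X2 → ℝ} (hq : IsPMF q) (x : X1 × X2) : q x ≤ margA q x.1 :=
  Finset.single_le_sum (f := fun x2 => q (x.1, x2)) (fun _ _ => hq.1 _) (Finset.mem_univ x.2)

theorem le_margB {q : X1 × X2 → ℝ} (hq : IsPMF q) (x : X1 × X2) : q x ≤ margB q x.2 :=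
  Finset.single_le_sum (f := fun x1 => q (x1, x.2)) (fun _ _ => hq.1 _) (Finset.mem_univ x.1)

theorem sq_le_indep {q : X1 × X2 → ℝ} (hq : IsPMF q) (x : X1 × X2) : q x ^ 2 ≤ indep q x := by
  rw [sq]
  exact mul_le_mul (le_margA hq x) (le_margB hq x) (hq.1 x) ((margA_isPMF hq).1 _)

theorem eq_zero_of_indep {q : X1 × X2 → ℝ} (hq : IsPMF q) (x : X1 × X2) (h : indep q x = 0) :
    q x = 0 := by
  have := sq_le_indep hq x
  rw [h] at this
  exact pow_eq_zero_iff (two_ne_zero) |>.1 (le_antisymm this (sq_nonneg _))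

theorem IsPMF.le_one {α : Type*} [Fintype α] {p : α → ℝ} (hp : IsPMF p) (a : α) : p a ≤ 1 := by
  rw [← hp.2]
  exact Finset.single_le_sum (f := p) (fun _ _ => hp.1 _) (Finset.mem_univ a)

theorem outDistJ_isPMF {W : X1 → X2 → Y → ℝ} (hW : IsChannel W) {q : X1 × X2 → ℝ}
    (hq : IsPMF q) : IsPMF (outDistJ W q) := by
  refine ⟨fun y => ?_, ?_⟩
  · rw [outDistJ_eq]
    exact Finset.sum_nonneg fun x _ => mul_nonneg (hq.1 x) (hW.1 _ _ _)
  · simp only [outDistJ_eq]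
    rw [Finset.sum_comm]
    simp only [← Finset.mul_sum, hW.2, mul_one, hq.2]

theorem le_outDistJ {W : X1 → X2 → Y → ℝ} (hW : IsChannel W) {q : X1 × X2 → ℝ}
    (hq : IsPMF q) (x : X1 × X2) (y : Y) : q x * W x.1 x.2 y ≤ outDistJ W q y := by
  rw [outDistJ_eq]
  exact Finset.single_le_sum (f := fun x : X1 × X2 => q x * W x.1 x.2 y)
    (fun x _ => mul_nonneg (hq.1 x) (hW.1 _ _ _)) (Finset.mem_univ x)

theorem outDistJ_ac {W : X1 → X2 → Y → ℝ} (hW : IsChannel W) {p q : X1 × X2 → ℝ}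
    (hp : IsPMF p) (hpq : ∀ x, p x = 0 → q x = 0) (y : Y)
    (h : outDistJ W p y = 0) : outDistJ W q y = 0 := by
  rw [outDistJ_eq]
  refine Finset.sum_eq_zero fun x _ => ?_
  have h1 := le_outDistJ hW hp x y
  rw [h] at h1
  rcases mul_eq_zero.1 (le_antisymm h1 (mul_nonneg (hp.1 x) (hW.1 _ _ _))) with h2 | h2
  · rw [hpq x h2, zero_mul]
  · rw [h2, mul_zero]

/-! ### Information identities and the upper bound -/

/-- Under any weight `r` that vanishes when `p x = 0`, `jBar W p x` splits into a difference of
logarithms; the junk value of `log (W / 0)` never contributes. -/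
theorem mul_jBar {W : X1 → X2 → Y → ℝ} (hW : IsChannel W) {p : X1 × X2 → ℝ}
    (hp : IsPMF p) (x : X1 × X2) (r : ℝ) (hr : p x = 0 → r = 0) :
    r * jBar W p x = r * ((∑ y, W x.1 x.2 y * Real.log (W x.1 x.2 y)) / Real.log 2 -
      (∑ y, W x.1 x.2 y * Real.log (outDistJ W p y)) / Real.log 2) := by
  by_cases h0 : r = 0
  · simp [h0]
  congr 1
  rw [jBar, ← sub_div, ← Finset.sum_sub_distrib, Finset.sum_div]
  refine Finset.sum_congr rfl fun y _ => ?_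
  rcases (hW.1 x.1 x.2 y).eq_or_lt with hw | hw
  · simp [← hw]
  have hpx : 0 < p x := lt_of_le_of_ne (hp.1 x) fun h => h0 (hr h.symm)
  have ho : 0 < outDistJ W p y := (mul_pos hpx hw).trans_le (le_outDistJ hW hp x y)
  rw [Real.logb, Real.log_div hw.ne' ho.ne']
  ring

/-- The compensation identity: `E_q[i_p] - I(q) = D(q_Y ‖ p_Y)`. -/
theorem golden {W : X1 → X2 → Y → ℝ} (hW : IsChannel W) {p q : X1 × X2 → ℝ}
    (hp : IsPMF p) (hq : IsPMF q) (hpq : ∀ x, p x = 0 → q x = 0) :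
    ∑ x, q x * jBar W p x - IsumJ W q =
      (∑ y, outDistJ W q y * (Real.log (outDistJ W q y) - Real.log (outDistJ W p y))) /
        Real.log 2 := by
  rw [IsumJ_eq, ← Finset.sum_sub_distrib]
  have h1 : ∀ x, q x * jBar W p x - q x * jBar W q x =
      ∑ y, q x * W x.1 x.2 y * (Real.log (outDistJ W q y) - Real.log (outDistJ W p y)) /
        Real.log 2 := by
    intro x
    rw [mul_jBar hW hp x _ (hpq x), mul_jBar hW hq x _ id, ← mul_sub, sub_sub_sub_cancel_left,
      ← sub_div, ← Finset.sum_sub_distrib, Finset.sum_div, Finset.mul_sum]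
    refine Finset.sum_congr rfl fun y _ => ?_
    ring
  simp only [h1]
  rw [Finset.sum_comm, Finset.sum_div]
  refine Finset.sum_congr rfl fun y _ => ?_
  conv_rhs => rw [outDistJ_eq W q y]
  rw [Finset.sum_mul, Finset.sum_div]
  simp only [outDistJ_eq]

/-- Among product reference measures, the product of the marginals minimises relative entropy. -/
theorem MIJ_le_relEntropy {q : X1 × X2 → ℝ} (hq : IsPMF q) {p1 : X1 → ℝ} {p2 : X2 → ℝ}
    (h1 : IsPMF p1) (h2 : IsPMF p2) (hpq : ∀ x, prodDist p1 p2 x = 0 → q x = 0) :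
    MIJ q * Real.log 2 ≤ ∑ x, q x * Real.log (q x / prodDist p1 p2 x) := by
  have gA := gibbs (margA_isPMF hq).1 h1.1
    (fun i hi => Finset.sum_eq_zero fun j _ => hpq (i, j) (by simp [prodDist, hi]))
    (by rw [h1.2, (margA_isPMF hq).2])
  have gB := gibbs (margB_isPMF hq).1 h2.1
    (fun j hj => Finset.sum_eq_zero fun i _ => hpq (i, j) (by simp [prodDist, hj]))
    (by rw [h2.2, (margB_isPMF hq).2])
  have eA : ∑ i, margA q i * (Real.log (margA q i) - Real.log (p1 i)) =
      ∑ x, q x * (Real.log (margA q x.1) - Real.log (p1 x.1)) := by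
    rw [Fintype.sum_prod_type]
    refine Finset.sum_congr rfl fun i _ => ?_
    dsimp only
    rw [← Finset.sum_mul]; rfl
  have eB : ∑ j, margB q j * (Real.log (margB q j) - Real.log (p2 j)) =
      ∑ x, q x * (Real.log (margB q x.2) - Real.log (p2 x.2)) := by
    rw [Fintype.sum_prod_type_right]
    refine Finset.sum_congr rfl fun i _ => ?_
    dsimp only
    rw [← Finset.sum_mul]; rfl
  rw [eA] at gA
  rw [eB] at gB
  have key : ∑ x, q x * Real.log (q x / prodDist p1 p2 x) = MIJ q * Real.log 2 +
      ∑ x, q x * (Real.log (margA q x.1) - Real.log (p1 x.1)) +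
      ∑ x, q x * (Real.log (margB q x.2) - Real.log (p2 x.2)) := by
    rw [MIJ_eq, ← Finset.sum_add_distrib, ← Finset.sum_add_distrib]
    refine Finset.sum_congr rfl fun x _ => ?_
    by_cases hx : q x = 0
    · simp [hx]
    have hp : prodDist p1 p2 x ≠ 0 := fun h => hx (hpq x h)
    have hi : indep q x ≠ 0 := fun h => hx (eq_zero_of_indep hq x h)
    rw [Real.log_div hx hp, Real.log_div hx hi]
    simp only [prodDist, indep] at hp hi ⊢
    rw [Real.log_mul (left_ne_zero_of_mul hp) (right_ne_zero_of_mul hp),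
      Real.log_mul (left_ne_zero_of_mul hi) (right_ne_zero_of_mul hi)]
    ring
  linarith

/-- `I(X₁;X₂) ln 2 ≥ ∑ (q - p)² / (2 wt)`, with `p` the product of the marginals of `q`. -/
theorem MIJ_lower {q : X1 × X2 → ℝ} (hq : IsPMF q) :
    ∑ x, (q x - indep q x) ^ 2 / (2 * wt q x) ≤ MIJ q * Real.log 2 := by
  have h : ∑ x, (q x - indep q x) ^ 2 / (2 * wt q x) ≤
      ∑ x, (q x * Real.log (q x / indep q x) - q x + indep q x) :=
    Finset.sum_le_sum fun x _ =>
      relEntropy_term_lower ((indep_isPMF hq).1 x) (hq.1 x) (eq_zero_of_indep hq x)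
  rw [Finset.sum_add_distrib, Finset.sum_sub_distrib, hq.2, (indep_isPMF hq).2, ← MIJ_eq] at h
  linarith

theorem wt_nonneg {q : X1 × X2 → ℝ} (hq : IsPMF q) (x : X1 × X2) : 0 ≤ wt q x := by
  have := (indep_isPMF hq).1 x
  unfold wt; positivity

theorem MIJ_nonneg {q : X1 × X2 → ℝ} (hq : IsPMF q) : 0 ≤ MIJ q := by
  have h := MIJ_lower hq
  have h1 : 0 ≤ ∑ x, (q x - indep q x) ^ 2 / (2 * wt q x) :=
    Finset.sum_nonneg fun x _ => div_nonneg (sq_nonneg _) (by linarith [wt_nonneg hq x])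
  exact nonneg_of_mul_nonneg_left (h1.trans h) (Real.log_pos one_lt_two)

theorem eq_indep_of_MIJ {q : X1 × X2 → ℝ} (hq : IsPMF q) (h0 : MIJ q ≤ 0) : q = indep q := by
  have h := MIJ_lower hq
  have hn : ∀ x ∈ Finset.univ, 0 ≤ (q x - indep q x) ^ 2 / (2 * wt q x) :=
    fun x _ => div_nonneg (sq_nonneg _) (by linarith [wt_nonneg hq x])
  have h1 : ∑ x, (q x - indep q x) ^ 2 / (2 * wt q x) = 0 :=
    le_antisymm (h.trans (mul_nonpos_of_nonpos_of_nonneg h0 (Real.log_pos one_lt_two).le))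
      (Finset.sum_nonneg hn)
  funext x
  have h2 := (Finset.sum_eq_zero_iff_of_nonneg hn).1 h1 x (Finset.mem_univ x)
  rcases div_eq_zero_iff.1 h2 with h3 | h3
  · exact sub_eq_zero.1 (pow_eq_zero_iff two_ne_zero |>.1 h3)
  · have h4 := (indep_isPMF hq).1 x
    unfold wt at h3
    have h5 : |q x - indep q x| = 0 := by linarith [abs_nonneg (q x - indep q x)]
    exact sub_eq_zero.1 (abs_eq_zero.1 h5)

theorem MIJ_indep {q : X1 × X2 → ℝ} (h : q = indep q) : MIJ q = 0 := by
  have h1 := MIJ_eq q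
  rw [← h] at h1
  have h2 : ∑ x, q x * Real.log (q x / q x) = 0 := by
    refine Finset.sum_eq_zero fun x _ => ?_
    by_cases hx : q x = 0
    · simp [hx]
    · simp [div_self hx]
  rw [h2] at h1
  exact (mul_eq_zero.1 h1).resolve_right (Real.log_pos one_lt_two).ne'

/-- The finite-`a` upper bound: correlation with mutual information `MIJ q` raises the sum rate
by at most `√(2 ln 2 · MIJ q · Fn q)`, by Cauchy–Schwarz against the quadratic lower bound for
relative entropy. -/
theorem IsumJ_upper {W : X1 → X2 → Y → ℝ} (hW : IsChannel W) {q : X1 × X2 → ℝ}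
    (hq : IsPMF q) (hC : IsumJ W (indep q) ≤ Csum W) :
    IsumJ W q - Csum W ≤ Real.sqrt (2 * (MIJ q * Real.log 2) * Fn W q) := by
  have hp := indep_isPMF hq
  have hg := golden hW hp hq (eq_zero_of_indep hq)
  have hD : 0 ≤ (∑ y, outDistJ W q y *
      (Real.log (outDistJ W q y) - Real.log (outDistJ W (indep q) y))) / Real.log 2 :=
    div_nonneg (gibbs (outDistJ_isPMF hW hq).1 (outDistJ_isPMF hW hp).1
      (outDistJ_ac hW hp (eq_zero_of_indep hq))
      (by rw [(outDistJ_isPMF hW hq).2, (outDistJ_isPMF hW hp).2]))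
      (Real.log_pos one_lt_two).le
  have e : ∑ x, (q x - indep q x) * (jBar W (indep q) x - Csum W) =
      ∑ x, q x * jBar W (indep q) x - IsumJ W (indep q) := by
    have : ∀ x, (q x - indep q x) * (jBar W (indep q) x - Csum W) =
        q x * jBar W (indep q) x - indep q x * jBar W (indep q) x -
          (q x * Csum W - indep q x * Csum W) := fun x => by ring
    simp only [this, Finset.sum_sub_distrib, ← Finset.sum_mul, hq.2, hp.2, sub_self, sub_zero]
    rw [IsumJ_eq]
  refine le_trans (b := ∑ x, (q x - indep q x) * (jBar W (indep q) x - Csum W)) ?_ ?_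
  · rw [e]; linarith
  refine Real.le_sqrt_of_sq_le ?_
  have hcs := Finset.sum_sq_le_sum_mul_sum_of_sq_le_mul Finset.univ
    (r := fun x => (q x - indep q x) * (jBar W (indep q) x - Csum W))
    (f := fun x => 2 * ((q x - indep q x) ^ 2 / (2 * wt q x)))
    (g := fun x => wt q x * (jBar W (indep q) x - Csum W) ^ 2)
    (fun x _ => mul_nonneg zero_le_two
      (div_nonneg (sq_nonneg _) (by linarith [wt_nonneg hq x])))
    (fun x _ => mul_nonneg (wt_nonneg hq x) (sq_nonneg _))
    (fun x _ => by
      rcases (wt_nonneg hq x).eq_or_lt with h0 | h0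
      · have h4 := (indep_isPMF hq).1 x
        rw [← h0]
        unfold wt at h0
        have h5 : |q x - indep q x| = 0 := by linarith [abs_nonneg (q x - indep q x)]
        simp [abs_eq_zero.1 h5]
      · refine le_of_eq ?_
        field_simp)
  refine hcs.trans ?_
  rw [← Finset.mul_sum]
  refine mul_le_mul_of_nonneg_right ?_
    (Finset.sum_nonneg fun x _ => mul_nonneg (wt_nonneg hq x) (sq_nonneg _))
  exact mul_le_mul_of_nonneg_left (MIJ_lower hq) zero_le_two

/-! ### Continuity and compactness -/

theorem continuous_outDistJ (W : X1 → X2 → Y → ℝ) (y : Y) :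
    Continuous fun q : X1 × X2 → ℝ => outDistJ W q y := by
  unfold outDistJ; fun_prop

theorem continuous_indep (x : X1 × X2) :
    Continuous fun q : X1 × X2 → ℝ => indep q x := by
  unfold indep prodDist margA margB; fun_prop

theorem continuous_wt (x : X1 × X2) :
    Continuous fun q : X1 × X2 → ℝ => wt q x := by
  have := continuous_indep (X1 := X1) (X2 := X2) x
  unfold wt; fun_prop

theorem continuousOn_IsumJ {W : X1 → X2 → Y → ℝ} (hW : IsChannel W) :
    ContinuousOn (IsumJ W) {q | IsPMF q} := by
  have hc : Continuous fun q : X1 × X2 → ℝ =>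
      ∑ x, q x * ((∑ y, W x.1 x.2 y * Real.log (W x.1 x.2 y)) / Real.log 2) -
        (∑ y, outDistJ W q y * Real.log (outDistJ W q y)) / Real.log 2 := by
    have h1 : ∀ y, Continuous fun q : X1 × X2 → ℝ =>
        outDistJ W q y * Real.log (outDistJ W q y) :=
      fun y => Real.continuous_mul_log.comp (continuous_outDistJ W y)
    fun_prop
  refine hc.continuousOn.congr fun q hq => ?_
  rw [IsumJ_eq]
  simp only [mul_jBar hW hq _ _ id, mul_sub, Finset.sum_sub_distrib]
  congr 1
  simp only [Finset.sum_div, Finset.mul_sum]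
  rw [Finset.sum_comm]
  refine Finset.sum_congr rfl fun y _ => ?_
  conv_rhs => rw [outDistJ_eq W q y]
  rw [Finset.sum_mul, Finset.sum_div]
  refine Finset.sum_congr rfl fun x _ => ?_
  rw [outDistJ_eq]
  ring

theorem continuousOn_MIJ :
    ContinuousOn (MIJ : (X1 × X2 → ℝ) → ℝ) {q | IsPMF q} := by
  have hA : ∀ x : X1, Continuous fun q : X1 × X2 → ℝ => margA q x := fun x => by
    unfold margA; fun_prop
  have hB : ∀ x : X2, Continuous fun q : X1 × X2 → ℝ => margB q x := fun x => by
    unfold margB; fun_prop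
  have hc : Continuous fun q : X1 × X2 → ℝ =>
      (∑ x, q x * Real.log (q x) - ∑ x, margA q x * Real.log (margA q x) -
        ∑ x, margB q x * Real.log (margB q x)) / Real.log 2 := by
    have h0 : ∀ x : X1 × X2, Continuous fun q : X1 × X2 → ℝ => q x * Real.log (q x) :=
      fun x => Real.continuous_mul_log.comp (continuous_apply x)
    have h1 : ∀ x : X1, Continuous fun q : X1 × X2 → ℝ => margA q x * Real.log (margA q x) :=
      fun x => Real.continuous_mul_log.comp (hA x)
    have h2 : ∀ x : X2, Continuous fun q : X1 × X2 → ℝ => margB q x * Real.log (margB q x) :=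
      fun x => Real.continuous_mul_log.comp (hB x)
    fun_prop
  refine hc.continuousOn.congr fun q hq => ?_
  dsimp only
  rw [eq_div_iff (Real.log_pos one_lt_two).ne', MIJ_eq]
  have eA : ∑ i, margA q i * Real.log (margA q i) = ∑ x, q x * Real.log (margA q x.1) := by
    rw [Fintype.sum_prod_type]
    refine Finset.sum_congr rfl fun i _ => ?_
    dsimp only
    rw [← Finset.sum_mul]; rfl
  have eB : ∑ i, margB q i * Real.log (margB q i) = ∑ x, q x * Real.log (margB q x.2) := by
    rw [Fintype.sum_prod_type_right]
    refine Finset.sum_congr rfl fun i _ => ?_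
    dsimp only
    rw [← Finset.sum_mul]; rfl
  rw [eA, eB, ← Finset.sum_sub_distrib, ← Finset.sum_sub_distrib]
  refine Finset.sum_congr rfl fun x _ => ?_
  by_cases hx : q x = 0
  · simp [hx]
  have hi : indep q x ≠ 0 := fun h => hx (eq_zero_of_indep hq x h)
  rw [Real.log_div hx hi]
  simp only [prodDist, indep] at hi ⊢
  rw [Real.log_mul (left_ne_zero_of_mul hi) (right_ne_zero_of_mul hi)]
  ring

theorem wt_le {q : X1 × X2 → ℝ} (hq : IsPMF q) (x : X1 × X2) :
    wt q x ≤ 2 * Real.sqrt (indep q x) := by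
  have h0 := (indep_isPMF hq).1 x
  have h1 := (indep_isPMF hq).le_one x
  have h2 : q x ≤ Real.sqrt (indep q x) := Real.le_sqrt_of_sq_le (sq_le_indep hq x)
  have h3 : indep q x ≤ Real.sqrt (indep q x) := Real.le_sqrt_of_sq_le (by nlinarith)
  have h4 : |q x - indep q x| ≤ q x + indep q x :=
    abs_le.2 ⟨by linarith [hq.1 x], by linarith⟩
  unfold wt
  linarith

theorem IsChannel.le_one {W : X1 → X2 → Y → ℝ} (hW : IsChannel W) (x1 : X1) (x2 : X2) (y : Y) :
    W x1 x2 y ≤ 1 :=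
  IsPMF.le_one (p := W x1 x2) ⟨hW.1 x1 x2, hW.2 x1 x2⟩ y

/-- The weight controls both logarithmic singularities of `(jBar W (indep q) x)²`. -/
theorem wt_mul_le {W : X1 → X2 → Y → ℝ} (hW : IsChannel W) {q : X1 × X2 → ℝ} (hq : IsPMF q)
    (x : X1 × X2) (y y' : Y) :
    wt q x * (W x.1 x.2 y * W x.1 x.2 y') ≤
      2 * (outDistJ W (indep q) y ^ (1 / 4 : ℝ) * outDistJ W (indep q) y' ^ (1 / 4 : ℝ)) := by
  have h0 := (indep_isPMF hq).1 x
  have key : ∀ y, indep q x ^ (1 / 4 : ℝ) * W x.1 x.2 y ≤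
      outDistJ W (indep q) y ^ (1 / 4 : ℝ) := by
    intro y
    have hw := hW.1 x.1 x.2 y
    refine le_trans ?_ (Real.rpow_le_rpow (mul_nonneg h0 hw)
      (le_outDistJ hW (indep_isPMF hq) x y) (by norm_num))
    rw [Real.mul_rpow h0 hw]
    refine mul_le_mul_of_nonneg_left ?_ (Real.rpow_nonneg h0 _)
    exact Real.self_le_rpow_of_le_one hw (hW.le_one _ _ _) (by norm_num)
  have e : Real.sqrt (indep q x) = indep q x ^ (1 / 4 : ℝ) * indep q x ^ (1 / 4 : ℝ) := by
    rw [Real.sqrt_eq_rpow, ← Real.rpow_add_of_nonneg h0 (by norm_num) (by norm_num)]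
    norm_num
  calc wt q x * (W x.1 x.2 y * W x.1 x.2 y')
      ≤ 2 * Real.sqrt (indep q x) * (W x.1 x.2 y * W x.1 x.2 y') :=
        mul_le_mul_of_nonneg_right (wt_le hq x) (mul_nonneg (hW.1 _ _ _) (hW.1 _ _ _))
    _ = 2 * ((indep q x ^ (1 / 4 : ℝ) * W x.1 x.2 y) *
          (indep q x ^ (1 / 4 : ℝ) * W x.1 x.2 y')) := by rw [e]; ring
    _ ≤ _ := by
        refine mul_le_mul_of_nonneg_left ?_ zero_le_two
        exact mul_le_mul (key y) (key y')
          (mul_nonneg (Real.rpow_nonneg h0 _) (hW.1 _ _ _))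
          (Real.rpow_nonneg ((outDistJ_isPMF hW (indep_isPMF hq)).1 y) _)

/-- Although `jBar W (indep q)` blows up as output probabilities tend to `0`, the second moment
`Fn W` is continuous on the whole simplex: after expanding the square each logarithm is multiplied
by a weight that tames it (`wt_mul_le`, `continuousOn_mul_log`). -/
theorem continuousOn_Fn {W : X1 → X2 → Y → ℝ} (hW : IsChannel W) :
    ContinuousOn (Fn W) {q | IsPMF q} := by
  have hs : ∀ y, ContinuousOn (fun q : X1 × X2 → ℝ => outDistJ W (indep q) y) {q | IsPMF q} :=
    fun y => by
      have : Continuous fun q : X1 × X2 → ℝ => indep q := continuous_pi fun x => continuous_indep x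
      exact ((continuous_outDistJ W y).comp this).continuousOn
  have hs0 : ∀ y, ∀ q ∈ {q : X1 × X2 → ℝ | IsPMF q}, 0 ≤ outDistJ W (indep q) y :=
    fun y q hq => (outDistJ_isPMF hW (indep_isPMF hq)).1 y
  have hs1 : ∀ y, ∀ q ∈ {q : X1 × X2 → ℝ | IsPMF q}, outDistJ W (indep q) y ^ (1 / 4 : ℝ) ≤ 1 :=
    fun y q hq => Real.rpow_le_one (hs0 y q hq)
      ((outDistJ_isPMF hW (indep_isPMF hq)).le_one y) (by norm_num)
  -- the quadratic term with two logarithms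
  have c2 : ∀ x y y', ContinuousOn (fun q : X1 × X2 → ℝ =>
      wt q x * (W x.1 x.2 y * W x.1 x.2 y') * Real.log (outDistJ W (indep q) y) *
        Real.log (outDistJ W (indep q) y')) {q | IsPMF q} := by
    intro x y y'
    have hw : ∀ q ∈ {q : X1 × X2 → ℝ | IsPMF q}, 0 ≤ wt q x * (W x.1 x.2 y * W x.1 x.2 y') :=
      fun q hq => mul_nonneg (wt_nonneg hq x) (mul_nonneg (hW.1 _ _ _) (hW.1 _ _ _))
    refine continuousOn_mul_log (K := 8) (continuousOn_mul_log (K := 2)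
      ((continuous_wt x).mul continuous_const).continuousOn (hs y) (hs0 y) ?_) (hs y') (hs0 y') ?_
    · intro q hq
      rw [abs_of_nonneg (hw q hq)]
      refine (wt_mul_le hW hq x y y').trans ?_
      have := hs1 y' q hq
      have h2 := Real.rpow_nonneg (hs0 y q hq) (1 / 4 : ℝ)
      nlinarith
    · intro q hq
      rw [abs_mul, abs_of_nonneg (hw q hq)]
      refine (mul_le_mul_of_nonneg_right (wt_mul_le hW hq x y y') (abs_nonneg _)).trans ?_
      have h2 := Real.rpow_nonneg (hs0 y q hq) (1 / 4 : ℝ)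
      have h3 := Real.rpow_nonneg (hs0 y' q hq) (1 / 4 : ℝ)
      have h4 : |Real.log (outDistJ W (indep q) y)| * outDistJ W (indep q) y ^ (1 / 4 : ℝ) ≤ 4 := by
        rcases (hs0 y q hq).eq_or_lt with h | h
        · rw [← h]; simp
        · have := Real.abs_log_mul_self_rpow_lt _ (1 / 4 : ℝ) h
            ((outDistJ_isPMF hW (indep_isPMF hq)).le_one y) (by norm_num)
          rw [abs_mul, abs_of_nonneg h2] at this
          norm_num at this ⊢
          exact this.le
      have h5 := mul_le_mul_of_nonneg_left h4 h3
      nlinarith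
  -- the cross term with a single logarithm
  have c1 : ∀ x y, ContinuousOn (fun q : X1 × X2 → ℝ =>
      wt q x * W x.1 x.2 y * Real.log (outDistJ W (indep q) y)) {q | IsPMF q} := by
    intro x y
    refine (continuousOn_finsetSum Finset.univ fun y' _ => continuousOn_mul_log (K := 2)
      (h := fun q : X1 × X2 → ℝ => wt q x * (W x.1 x.2 y * W x.1 x.2 y'))
      ((continuous_wt x).mul continuous_const).continuousOn (hs y) (hs0 y) ?_).congr ?_
    · intro q hq
      rw [abs_of_nonneg (mul_nonneg (wt_nonneg hq x) (mul_nonneg (hW.1 _ _ _) (hW.1 _ _ _)))]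
      refine (wt_mul_le hW hq x y y').trans ?_
      have := hs1 y' q hq
      have h2 := Real.rpow_nonneg (hs0 y q hq) (1 / 4 : ℝ)
      nlinarith
    · intro q _
      dsimp only
      rw [← Finset.sum_mul, ← Finset.mul_sum, ← Finset.mul_sum, hW.2, mul_one]
  have hx : ∀ x, ContinuousOn (fun q : X1 × X2 → ℝ =>
      wt q x * ((∑ y, W x.1 x.2 y * Real.log (W x.1 x.2 y)) / Real.log 2 - Csum W) ^ 2 -
      2 * ((∑ y, W x.1 x.2 y * Real.log (W x.1 x.2 y)) / Real.log 2 - Csum W) / Real.log 2 *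
        ∑ y, wt q x * W x.1 x.2 y * Real.log (outDistJ W (indep q) y) +
      1 / Real.log 2 ^ 2 * ∑ y, ∑ y', wt q x * (W x.1 x.2 y * W x.1 x.2 y') *
        Real.log (outDistJ W (indep q) y) * Real.log (outDistJ W (indep q) y'))
      {q | IsPMF q} := by
    intro x
    refine ContinuousOn.add (ContinuousOn.sub ?_ ?_) ?_
    · exact ((continuous_wt x).mul continuous_const).continuousOn
    · exact continuousOn_const.mul (continuousOn_finsetSum _ fun y _ => c1 x y)
    · exact continuousOn_const.mul (continuousOn_finsetSum _ fun y _ =>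
        continuousOn_finsetSum _ fun y' _ => c2 x y y')
  refine (continuousOn_finsetSum Finset.univ fun x _ => hx x).congr fun q hq => ?_
  rw [Fn]
  refine Finset.sum_congr rfl fun x _ => ?_
  have hz : indep q x = 0 → wt q x = 0 := fun h => by simp [wt, h, eq_zero_of_indep hq x h]
  by_cases h0 : wt q x = 0
  · simp [h0]
  have hj := mul_left_cancel₀ h0 (mul_jBar hW (indep_isPMF hq) x (wt q x) hz)
  have e1 : ∑ y, wt q x * W x.1 x.2 y * Real.log (outDistJ W (indep q) y) =
      wt q x * ∑ y, W x.1 x.2 y * Real.log (outDistJ W (indep q) y) := by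
    rw [Finset.mul_sum]; exact Finset.sum_congr rfl fun y _ => by ring
  have e2 : ∑ y, ∑ y', wt q x * (W x.1 x.2 y * W x.1 x.2 y') *
        Real.log (outDistJ W (indep q) y) * Real.log (outDistJ W (indep q) y') =
      wt q x * (∑ y, W x.1 x.2 y * Real.log (outDistJ W (indep q) y)) ^ 2 := by
    rw [sq, Finset.sum_mul_sum, Finset.mul_sum]
    refine Finset.sum_congr rfl fun y _ => ?_
    rw [Finset.mul_sum]; exact Finset.sum_congr rfl fun y _ => by ring
  rw [hj, e1, e2]
  ring

theorem isCompact_isPMF (α : Type*) [Fintype α] : IsCompact {p : α → ℝ | IsPMF p} :=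
  isCompact_stdSimplex ℝ α

theorem bddAbove_IsumJ {W : X1 → X2 → Y → ℝ} (hW : IsChannel W) :
    BddAbove (IsumJ W '' {q | IsPMF q}) :=
  (isCompact_isPMF _).bddAbove_image (continuousOn_IsumJ hW)

theorem Isum_le_Csum {W : X1 → X2 → Y → ℝ} (hW : IsChannel W) {p1 : X1 → ℝ} {p2 : X2 → ℝ}
    (h1 : IsPMF p1) (h2 : IsPMF p2) : Isum W p1 p2 ≤ Csum W := by
  refine le_csSup ((bddAbove_IsumJ hW).mono ?_) ⟨p1, p2, h1, h2, rfl⟩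
  rintro r ⟨p1, p2, h1, h2, rfl⟩
  exact ⟨_, prodDist_isPMF h1 h2, (Isum_eq W p1 p2).symm⟩

theorem exists_isPMF (α : Type*) [Fintype α] [Nonempty α] : ∃ p : α → ℝ, IsPMF p :=
  ⟨fun _ => 1 / Fintype.card α, fun _ => by positivity, by simp⟩

theorem exists_Isum_eq_Csum [Nonempty X1] [Nonempty X2] {W : X1 → X2 → Y → ℝ}
    (hW : IsChannel W) :
    ∃ p1 p2, IsPMF p1 ∧ IsPMF p2 ∧ Isum W p1 p2 = Csum W := by
  obtain ⟨u1, hu1⟩ := exists_isPMF X1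
  obtain ⟨u2, hu2⟩ := exists_isPMF X2
  have hc : Continuous fun z : (X1 → ℝ) × (X2 → ℝ) => prodDist z.1 z.2 := by
    refine continuous_pi fun x => ?_
    unfold prodDist; fun_prop
  have hc' : ContinuousOn (fun z : (X1 → ℝ) × (X2 → ℝ) => IsumJ W (prodDist z.1 z.2))
      ({p | IsPMF p} ×ˢ {p | IsPMF p}) :=
    ContinuousOn.comp (g := IsumJ W) (f := fun z : (X1 → ℝ) × (X2 → ℝ) => prodDist z.1 z.2)
      (t := {q | IsPMF q}) (continuousOn_IsumJ hW) hc.continuousOn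
      fun z hz => prodDist_isPMF hz.1 hz.2
  obtain ⟨z, hz, hmax⟩ := ((isCompact_isPMF X1).prod (isCompact_isPMF X2)).exists_isMaxOn
    ⟨(u1, u2), hu1, hu2⟩ hc'
  refine ⟨z.1, z.2, hz.1, hz.2, le_antisymm (Isum_le_Csum hW hz.1 hz.2) ?_⟩
  refine csSup_le ⟨Isum W u1 u2, u1, u2, hu1, hu2, rfl⟩ ?_
  rintro r ⟨p1, p2, h1, h2, rfl⟩
  rw [Isum_eq, Isum_eq]
  have hmem : (p1, p2) ∈ ({p | IsPMF p} ×ˢ {p | IsPMF p} : Set ((X1 → ℝ) × (X2 → ℝ))) := ⟨h1, h2⟩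
  exact isMaxOn_iff.1 hmax (p1, p2) hmem

theorem Fn_eq_Vone {W : X1 → X2 → Y → ℝ} {p1 : X1 → ℝ} {p2 : X2 → ℝ}
    (h1 : IsPMF p1) (h2 : IsPMF p2) (hC : Isum W p1 p2 = Csum W) :
    Fn W (prodDist p1 p2) = Vone W p1 p2 := by
  rw [Vone_eq, hC, Fn]
  simp [wt, indep_prodDist h1 h2]

theorem Vone_le_VoneStar {W : X1 → X2 → Y → ℝ} (hW : IsChannel W) {p1 : X1 → ℝ} {p2 : X2 → ℝ}
    (h1 : IsPMF p1) (h2 : IsPMF p2) (hC : Isum W p1 p2 = Csum W) :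
    Vone W p1 p2 ≤ VoneStar W := by
  refine le_csSup (((isCompact_isPMF _).bddAbove_image (continuousOn_Fn hW)).mono ?_)
    ⟨p1, p2, h1, h2, hC, rfl⟩
  rintro v ⟨p1, p2, h1, h2, hC, rfl⟩
  exact ⟨_, prodDist_isPMF h1 h2, Fn_eq_Vone h1 h2 hC⟩

/-! ### The tilted inputs and the two one-sided limits -/

/-- The tilted family `q_t = p (1 + t (i - C_sum))` around an optimal product `p`.  Its mutual
information is at most `D(q_t ‖ p) = t² V₁ / (2 ln 2) + O(t³)`, while the sum rate is at least
`C_sum + t V₁ - O(t²)`.  The marginals of `q_t` need not be computed, thanks to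
`MIJ_le_relEntropy`. -/
theorem exists_tilted {W : X1 → X2 → Y → ℝ} (hW : IsChannel W) {p1 : X1 → ℝ} {p2 : X2 → ℝ}
    (h1 : IsPMF p1) (h2 : IsPMF p2) (hC : Isum W p1 p2 = Csum W) :
    ∃ M M' t0 : ℝ, 0 < t0 ∧ ∀ t, 0 < t → t ≤ t0 → ∃ q, IsPMF q ∧
      MIJ q * Real.log 2 ≤ t ^ 2 * Vone W p1 p2 / 2 + M' * t ^ 3 ∧
      Csum W + t * Vone W p1 p2 - M * t ^ 2 ≤ IsumJ W q := by
  set p := prodDist p1 p2 with hpdef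
  have hp : IsPMF p := prodDist_isPMF h1 h2
  set h : X1 × X2 → ℝ := fun x => jBar W p x - Csum W with hh
  have hV : Vone W p1 p2 = ∑ x, p x * h x ^ 2 := by rw [Vone_eq, hC]
  have hI : ∑ x, p x * jBar W p x = Csum W := by rw [← hC, Isum_eq, IsumJ_eq]
  have hm : ∑ x, p x * h x = 0 := by
    simp only [hh, mul_sub, Finset.sum_sub_distrib, ← Finset.sum_mul, hp.2, hI]; ring
  have hVj : ∑ x, p x * h x * jBar W p x = Vone W p1 p2 := by
    have : ∀ x, p x * h x * jBar W p x = p x * h x ^ 2 + p x * h x * Csum W := fun x => by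
      simp only [hh]; ring
    simp only [this, Finset.sum_add_distrib, ← Finset.sum_mul, hm, hV]; ring
  set e : Y → ℝ := fun y => ∑ x, p x * h x * W x.1 x.2 y with he
  refine ⟨(∑ y, e y ^ 2 / outDistJ W p y) / Real.log 2, 4 * ∑ x, p x * |h x| ^ 3,
    1 / (2 * (1 + ∑ x, |h x|)), ?_, ?_⟩
  · have : 0 ≤ ∑ x, |h x| := Finset.sum_nonneg fun x _ => abs_nonneg _
    positivity
  intro t ht htle
  have hsmall : ∀ x, |t * h x| ≤ 1 / 2 := by
    intro x
    have hS : |h x| ≤ ∑ x, |h x| :=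
      Finset.single_le_sum (f := fun x => |h x|) (fun x _ => abs_nonneg _) (Finset.mem_univ x)
    have h0 := abs_nonneg (h x)
    rw [abs_mul, abs_of_pos ht]
    rw [le_div_iff₀ (by linarith)] at htle
    nlinarith
  have hq : IsPMF fun x => p x * (1 + t * h x) := by
    refine ⟨fun x => mul_nonneg (hp.1 x) ?_, ?_⟩
    · linarith [(abs_le.1 (hsmall x)).1]
    · have : ∀ x, p x * (1 + t * h x) = p x + t * (p x * h x) := fun x => by ring
      simp only [this, Finset.sum_add_distrib, ← Finset.mul_sum, hm, hp.2]; ring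
  have hac : ∀ x, p x = 0 → p x * (1 + t * h x) = 0 := fun x hx => by rw [hx, zero_mul]
  refine ⟨fun x => p x * (1 + t * h x), hq, ?_, ?_⟩
  · refine (MIJ_le_relEntropy hq h1 h2 hac).trans ?_
    have hterm : ∀ x, p x * (1 + t * h x) * Real.log (p x * (1 + t * h x) / prodDist p1 p2 x) ≤
        p x * (t * h x + (t * h x) ^ 2 / 2 + 4 * |t * h x| ^ 3) := by
      intro x
      rw [← hpdef]
      by_cases hx : p x = 0
      · simp [hx]
      rw [mul_div_cancel_left₀ _ hx, mul_assoc]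
      exact mul_le_mul_of_nonneg_left (entropy_upper (hsmall x)) (hp.1 x)
    refine (Finset.sum_le_sum fun x _ => hterm x).trans (le_of_eq ?_)
    have : ∀ x, p x * (t * h x + (t * h x) ^ 2 / 2 + 4 * |t * h x| ^ 3) =
        t * (p x * h x) + t ^ 2 / 2 * (p x * h x ^ 2) + 4 * t ^ 3 * (p x * |h x| ^ 3) := fun x => by
      rw [abs_mul, abs_of_pos ht]; ring
    simp only [this, Finset.sum_add_distrib, ← Finset.mul_sum, hm, ← hV]
    ring
  · have hg := golden hW hp hq hac
    have hout : ∀ y, outDistJ W (fun x => p x * (1 + t * h x)) y - outDistJ W p y = t * e y := by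
      intro y
      rw [outDistJ_eq, outDistJ_eq, ← Finset.sum_sub_distrib, he, Finset.mul_sum]
      exact Finset.sum_congr rfl fun x _ => by ring
    have hchi := relEntropy_le_chiSq (outDistJ_isPMF hW hq).1 (outDistJ_isPMF hW hp).1
      (outDistJ_ac hW hp hac) (by rw [(outDistJ_isPMF hW hq).2, (outDistJ_isPMF hW hp).2])
    have hsum : ∑ y, (outDistJ W (fun x => p x * (1 + t * h x)) y - outDistJ W p y) ^ 2 /
        outDistJ W p y = t ^ 2 * ∑ y, e y ^ 2 / outDistJ W p y := by
      rw [Finset.mul_sum]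
      exact Finset.sum_congr rfl fun y _ => by rw [hout]; ring
    rw [hsum] at hchi
    have hdiv := div_le_div_of_nonneg_right hchi (Real.log_pos one_lt_two).le
    rw [← hg] at hdiv
    have hlin : ∑ x, p x * (1 + t * h x) * jBar W p x = Csum W + t * Vone W p1 p2 := by
      have : ∀ x, p x * (1 + t * h x) * jBar W p x =
          p x * jBar W p x + t * (p x * h x * jBar W p x) := fun x => by ring
      simp only [this, Finset.sum_add_distrib, ← Finset.mul_sum, hI, hVj]
    rw [hlin, mul_div_right_comm, mul_comm] at hdiv
    have e3 : t ^ 2 / Real.log 2 * ∑ y, e y ^ 2 / outDistJ W p y =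
        (∑ y, e y ^ 2 / outDistJ W p y) / Real.log 2 * t ^ 2 := by ring
    linarith

theorem le_Delta {W : X1 → X2 → Y → ℝ} (hW : IsChannel W) {a : ℝ} {q : X1 × X2 → ℝ}
    (hq : IsPMF q) (ha : MIJ q ≤ a) : IsumJ W q - Csum W ≤ Delta W a := by
  rw [Delta, sub_le_sub_iff_right]
  refine le_csSup ((bddAbove_IsumJ hW).mono ?_) ⟨q, hq, ha, rfl⟩
  rintro r ⟨q, hq, _, rfl⟩
  exact ⟨q, hq, rfl⟩

theorem Delta_nonneg [Nonempty X1] [Nonempty X2] {W : X1 → X2 → Y → ℝ} (hW : IsChannel W)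
    {a : ℝ} (ha : 0 ≤ a) : 0 ≤ Delta W a := by
  obtain ⟨p1, p2, h1, h2, hC⟩ := exists_Isum_eq_Csum hW
  have h := le_Delta hW (a := a) (prodDist_isPMF h1 h2)
    (by rw [MIJ_indep (indep_prodDist h1 h2).symm]; exact ha)
  rwa [← Isum_eq, hC, sub_self] at h

theorem Vone_nonneg {W : X1 → X2 → Y → ℝ} {p1 : X1 → ℝ} {p2 : X2 → ℝ}
    (h1 : IsPMF p1) (h2 : IsPMF p2) : 0 ≤ Vone W p1 p2 := by
  rw [Vone_eq]
  exact Finset.sum_nonneg fun x _ => mul_nonneg ((prodDist_isPMF h1 h2).1 x) (sq_nonneg _)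

open Filter Topology in
theorem Delta_liminf [Nonempty X1] [Nonempty X2] {W : X1 → X2 → Y → ℝ} (hW : IsChannel W)
    {b : ℝ} (hb : b < Real.sqrt (2 * VoneStar W * Real.log 2)) :
    ∀ᶠ a in 𝓝[>] (0 : ℝ), b < Delta W a / Real.sqrt a := by
  have hl : 0 < Real.log 2 := Real.log_pos one_lt_two
  rcases lt_or_ge b 0 with hb0 | hb0
  · filter_upwards [self_mem_nhdsWithin] with a ha
    exact hb0.trans_le (div_nonneg (Delta_nonneg hW (le_of_lt ha)) (Real.sqrt_nonneg _))
  have hb2 : b ^ 2 / (2 * Real.log 2) < VoneStar W := by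
    rw [div_lt_iff₀ (by positivity)]
    have := (Real.lt_sqrt hb0).1 hb
    linarith
  obtain ⟨u1, u2, hu1, hu2, huC⟩ := exists_Isum_eq_Csum hW
  obtain ⟨v, ⟨p1, p2, h1, h2, hC, rfl⟩, hv⟩ := exists_lt_of_lt_csSup
    (s := {v | ∃ p1 p2, IsPMF p1 ∧ IsPMF p2 ∧ Isum W p1 p2 = Csum W ∧ v = Vone W p1 p2})
    ⟨_, u1, u2, hu1, hu2, huC, rfl⟩ hb2
  obtain ⟨M, M', t0, ht0, H⟩ := exists_tilted hW h1 h2 hC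
  set V := Vone W p1 p2
  have hVpos : 0 < V := lt_of_le_of_lt (by positivity) hv
  -- the slope `c` of the parametrisation `t = c √a`
  obtain ⟨c, hc1, hc2⟩ : ∃ c, b / V < c ∧ c < Real.sqrt (2 * Real.log 2 / V) := by
    apply exists_between
    apply Real.lt_sqrt_of_sq_lt
    rw [div_lt_iff₀ (by positivity)] at hv
    rw [div_pow, div_lt_div_iff₀ (by positivity) hVpos]
    nlinarith
  have hc0 : 0 < c := lt_of_le_of_lt (by positivity) hc1
  have hc1' : b < c * V := (div_lt_iff₀ hVpos).1 hc1
  have hc2' : c ^ 2 * V / 2 < Real.log 2 := by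
    have := (Real.lt_sqrt hc0.le).1 hc2
    rw [lt_div_iff₀ hVpos] at this
    linarith
  have hs : Tendsto Real.sqrt (𝓝[>] (0 : ℝ)) (𝓝 0) := by
    have := Real.continuous_sqrt.tendsto 0
    rw [Real.sqrt_zero] at this
    exact this.mono_left nhdsWithin_le_nhds
  have E1 : ∀ᶠ s in 𝓝 (0 : ℝ), c * s < t0 :=
    (show Continuous fun s : ℝ => c * s by fun_prop).continuousAt.eventually_lt
      continuousAt_const (by simpa using ht0)
  have E2 : ∀ᶠ s in 𝓝 (0 : ℝ), c ^ 2 * V / 2 + M' * c ^ 3 * s < Real.log 2 :=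
    (show Continuous fun s : ℝ => c ^ 2 * V / 2 + M' * c ^ 3 * s by
      fun_prop).continuousAt.eventually_lt continuousAt_const (by simpa using hc2')
  have E3 : ∀ᶠ s in 𝓝 (0 : ℝ), b < c * V - M * c ^ 2 * s :=
    continuousAt_const.eventually_lt (show Continuous fun s : ℝ => c * V - M * c ^ 2 * s by
      fun_prop).continuousAt (by simpa using hc1')
  filter_upwards [self_mem_nhdsWithin, hs.eventually E1, hs.eventually E2, hs.eventually E3]
    with a ha e1 e2 e3
  have ha : 0 < a := ha
  have hsa : 0 < Real.sqrt a := Real.sqrt_pos.2 ha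
  have hsq : Real.sqrt a ^ 2 = a := Real.sq_sqrt ha.le
  generalize Real.sqrt a = s at *
  obtain ⟨q, hq, hq1, hq2⟩ := H (c * s) (by positivity) e1.le
  have hMI : MIJ q ≤ a := by
    refine le_of_mul_le_mul_right (hq1.trans ?_) hl
    have : (c * s) ^ 2 * V / 2 + M' * (c * s) ^ 3 = s ^ 2 * (c ^ 2 * V / 2 + M' * c ^ 3 * s) := by
      ring
    rw [this, hsq]
    exact mul_le_mul_of_nonneg_left e2.le ha.le
  rw [lt_div_iff₀ hsa]
  refine lt_of_lt_of_le ?_ (le_Delta hW hq hMI)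
  have := mul_lt_mul_of_pos_right e3 hsa
  nlinarith

open Filter Topology in
theorem Delta_limsup [Nonempty X1] [Nonempty X2] {W : X1 → X2 → Y → ℝ} (hW : IsChannel W)
    {b : ℝ} (hb : Real.sqrt (2 * VoneStar W * Real.log 2) < b) :
    ∀ᶠ a in 𝓝[>] (0 : ℝ), Delta W a / Real.sqrt a < b := by
  have hl : 0 < Real.log 2 := Real.log_pos one_lt_two
  have hb0 : 0 < b := (Real.sqrt_nonneg _).trans_lt hb
  obtain ⟨u1, u2, hu1, hu2, huC⟩ := exists_Isum_eq_Csum hW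
  have hVs : 0 ≤ VoneStar W := (Vone_nonneg hu1 hu2).trans (Vone_le_VoneStar hW hu1 hu2 huC)
  obtain ⟨V', hV1, hV2⟩ : ∃ V', VoneStar W < V' ∧ V' < b ^ 2 / (2 * Real.log 2) := by
    apply exists_between
    rw [lt_div_iff₀ (by positivity)]
    have := (Real.sqrt_lt' hb0).1 hb
    linarith
  have hV2' : Real.sqrt (2 * Real.log 2 * V') < b := by
    rw [Real.sqrt_lt' hb0]
    rw [lt_div_iff₀ (by positivity)] at hV2
    linarith
  -- inputs that are nearly independent and beat `C_sum` have second moment below `V'`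
  obtain ⟨a0, ha0, H⟩ : ∃ a0 > 0, ∀ q : X1 × X2 → ℝ, IsPMF q → MIJ q < a0 →
      Csum W ≤ IsumJ W q → Fn W q < V' := by
    set S : Set (X1 × X2 → ℝ) := {q | IsPMF q} with hS
    have hSc : IsCompact S := isCompact_isPMF _
    have hK : IsCompact (S ∩ (fun q => (Fn W q, IsumJ W q)) ⁻¹' (Set.Ici V' ×ˢ Set.Ici (Csum W))) :=
      hSc.of_isClosed_subset (((continuousOn_Fn hW).prodMk
        (continuousOn_IsumJ hW)).preimage_isClosed_of_isClosed hSc.isClosed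
        (isClosed_Ici.prod isClosed_Ici)) Set.inter_subset_left
    by_cases hne : (S ∩ (fun q => (Fn W q, IsumJ W q)) ⁻¹'
        (Set.Ici V' ×ˢ Set.Ici (Csum W))).Nonempty
    · obtain ⟨q0, ⟨hq0, hF0, hI0⟩, hmin⟩ := hK.exists_isMinOn hne
        (continuousOn_MIJ.mono Set.inter_subset_left)
      refine ⟨MIJ q0, ?_, fun q hq hlt hI => ?_⟩
      · by_contra hneg
        have hi := eq_indep_of_MIJ hq0 (not_lt.1 hneg)
        have hA := margA_isPMF hq0
        have hB := margB_isPMF hq0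
        have hle := Isum_le_Csum hW hA hB
        have hcap : Isum W (margA q0) (margB q0) = Csum W := by
          refine le_antisymm hle ?_
          rw [Isum_eq]
          change Csum W ≤ IsumJ W (indep q0)
          rw [← hi]; exact hI0
        have h3 := Vone_le_VoneStar hW hA hB hcap
        rw [← Fn_eq_Vone hA hB hcap] at h3
        change Fn W (indep q0) ≤ _ at h3
        rw [← hi] at h3
        exact absurd (hV1.trans_le hF0) (not_lt.2 h3)
      · by_contra hF
        exact absurd hlt (not_lt.2 (hmin ⟨hq, not_lt.1 hF, hI⟩))
    · refine ⟨1, one_pos, fun q hq _ hI => ?_⟩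
      by_contra hF
      exact hne ⟨q, hq, not_lt.1 hF, hI⟩
  filter_upwards [Ioo_mem_nhdsGT ha0] with a ha
  have hsa : 0 < Real.sqrt a := Real.sqrt_pos.2 ha.1
  refine lt_of_le_of_lt ?_ hV2'
  rw [div_le_iff₀ hsa, Delta, sub_le_iff_le_add]
  refine csSup_le ⟨_, prodDist u1 u2, prodDist_isPMF hu1 hu2, ?_, rfl⟩ ?_
  · rw [MIJ_indep (indep_prodDist hu1 hu2).symm]; exact ha.1.le
  rintro r ⟨q, hq, hqa, rfl⟩
  rcases lt_or_ge (IsumJ W q) (Csum W) with hlt | hge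
  · have : 0 ≤ Real.sqrt (2 * Real.log 2 * V') * Real.sqrt a := by positivity
    linarith
  have hF := H q hq (hqa.trans_lt ha.2) hge
  have hup := IsumJ_upper hW hq (by
    have := Isum_le_Csum hW (margA_isPMF hq) (margB_isPMF hq)
    rwa [Isum_eq] at this)
  rw [← sub_le_iff_le_add, ← Real.sqrt_mul (by nlinarith)]
  refine hup.trans (Real.sqrt_le_sqrt ?_)
  have hM := MIJ_nonneg hq
  have hV0 : 0 ≤ V' := hVs.trans hV1.le
  calc 2 * (MIJ q * Real.log 2) * Fn W q ≤ 2 * (MIJ q * Real.log 2) * V' :=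
        mul_le_mul_of_nonneg_left hF.le (by positivity)
    _ ≤ 2 * (a * Real.log 2) * V' := by gcongr
    _ = 2 * Real.log 2 * V' * a := by ring

/-- **Lemma 2.** Fix a discrete memoryless MAC with finite alphabets.  As
`a → 0⁺`, `Δ(a) = √(2 V₁* a ln 2) + o(√a)`; equivalently,
`lim_{a→0⁺} Δ(a)/√a = √(2 V₁* ln 2)`. -/
theorem Delta_asymptotics_sqrt
    (W : X1 → X2 → Y → ℝ) (hW : IsChannel W) :
    Filter.Tendsto (fun a : ℝ => Delta W a / Real.sqrt a)
      (nhdsWithin 0 (Set.Ioi 0))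
      (nhds (Real.sqrt (2 * VoneStar W * Real.log 2))) := by
  by_cases hX : Nonempty X1 ∧ Nonempty X2
  · obtain ⟨_, _⟩ := hX
    exact tendsto_order.2 ⟨fun b hb => Delta_liminf hW hb, fun b hb => Delta_limsup hW hb⟩
  · -- With an empty input alphabet there are no input pmfs and every supremum is `sSup ∅ = 0`.
    have hA : ∀ p1 : X1 → ℝ, ∀ p2 : X2 → ℝ, IsPMF p1 → IsPMF p2 → False := by
      intro p1 p2 h1 h2
      apply hX
      constructor
      · by_contra h
        rw [not_nonempty_iff] at h
        simpa using h1.2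
      · by_contra h
        rw [not_nonempty_iff] at h
        simpa using h2.2
    have hV : VoneStar W = 0 := by
      rw [VoneStar, ← Real.sSup_empty]
      congr 1
      exact Set.eq_empty_of_forall_notMem fun v ⟨p1, p2, h1, h2, _⟩ => hA p1 p2 h1 h2
    have hC : Csum W = 0 := by
      rw [Csum, ← Real.sSup_empty]
      congr 1
      exact Set.eq_empty_of_forall_notMem fun v ⟨p1, p2, h1, h2, _⟩ => hA p1 p2 h1 h2
    have hD : ∀ a, Delta W a = 0 := by
      intro a
      rw [Delta, hC, sub_zero, ← Real.sSup_empty]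
      congr 1
      exact Set.eq_empty_of_forall_notMem fun v ⟨q, hq, _⟩ =>
        hA _ _ (margA_isPMF hq) (margB_isPMF hq)
    simp [hV, hD]

end
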